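/- Let X and Y be complex Banach spaces, let R : X → Y be a bounded linear map, and let A, B : X → Y be bounded linear compact operators. Suppose there exists z₀ ∈ ℂ such that R + z₀·A + z₀²·B is boundedly invertible (i.e. it has a bounded linear two-sided inverse Y → X). Then the set S = { z ∈ ℂ : there exists u ∈ X, u ≠ 0, with (R + z·A + z²·B) u = 0 } is a closed subset of ℂ and every point of S is isolated in ℂ (S is discrete). -/

import Mathlib

/-- The set of `z ∈ ℂ` at which the quadratic pencil `R + z·A + z²·B` has nontrivial
kernel. -/
def critSet {X Y : Type*} [NormedAddCommGroup X] [NormedSpace ℂ X]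
    [NormedAddCommGroup Y] [NormedSpace ℂ Y]
    (R A B : X →L[ℂ] Y) : Set ℂ :=
  {z : ℂ | ∃ u : X, u ≠ 0 ∧ (R + z • A + z ^ 2 • B) u = 0}

/-!
If `S₀` inverts the pencil at `z₀`, then composing with `S₀` turns the pencil at `z₀ + w` into
`1 + w • K + w ^ 2 • L` with `K`, `L` compact. A kernel vector `u` of the latter gives an
eigenvector `(u, w • u)`, with eigenvalue `w⁻¹`, of the companion operator
`(u, v) ↦ (-(K u + L v), u)`. The companion operator need not be compact, but its square
is, so by Riesz's argument it has only finitely many eigenvalues outside any disc around `0`: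
critical parameters accumulate nowhere.
-/

open Bornology Filter Module.End Polynomial

theorem isClosed_and_isDiscrete_of_finite_inter {α : Type*} [MetricSpace α] {s : Set α}
    (hs : ∀ t, IsBounded t → (s ∩ t).Finite) : IsClosed s ∧ IsDiscrete s := by
  rw [← compl_mem_codiscrete_iff, codiscrete, codiscreteWithin_iff_locallyFiniteComplementWithin]
  refine fun x _ ↦ ⟨Metric.ball x 1, Metric.ball_mem_nhds x one_pos, ?_⟩
  simpa [Set.inter_comm] using hs _ Metric.isBounded_ball

theorem isCompactOperator_prodMk {M₁ M₂ M₃ : Type*} [Zero M₁] [TopologicalSpace M₁]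
    [TopologicalSpace M₂] [TopologicalSpace M₃] {f : M₁ → M₂} {g : M₁ → M₃}
    (hf : IsCompactOperator f) (hg : IsCompactOperator g) :
    IsCompactOperator fun x ↦ (f x, g x) := by
  obtain ⟨K, hK, hfK⟩ := hf
  obtain ⟨L, hL, hgL⟩ := hg
  exact ⟨K ×ˢ L, hK.prod hL, inter_mem hfK hgL⟩

theorem exists_mem_one_le_norm_sub_of_lt {𝕜 E : Type*} [NormedField 𝕜]
    [NormedAddCommGroup E] [NormedSpace 𝕜 E] {c : 𝕜} (hc : 1 < ‖c‖) {r : ℝ} (hr : ‖c‖ < r)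
    {F G : Submodule 𝕜 E} (hF : IsClosed (F : Set E)) (hFG : F < G) :
    ∃ x ∈ G, ‖x‖ ≤ r ∧ ∀ y ∈ F, 1 ≤ ‖x - y‖ := by
  obtain ⟨hle, x, hxG, hxF⟩ := SetLike.lt_iff_le_and_exists.1 hFG
  have hclosed : IsClosed (F.comap G.subtype : Set G) := hF.preimage continuous_subtype_val
  obtain ⟨y, hyr, hy⟩ := riesz_lemma_of_norm_lt hc hr hclosed ⟨⟨x, hxG⟩, hxF⟩
  exact ⟨y, y.2, hyr, fun z hz ↦ hy ⟨z, hle hz⟩ hz⟩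

theorem norm_le_norm_sub_of_sub_smul_mem {𝕜 E : Type*} [NormedField 𝕜]
    [SeminormedAddCommGroup E] [NormedSpace 𝕜 E] {F : Submodule 𝕜 E} {a : 𝕜} {x y z : E}
    (hy : ∀ w ∈ F, 1 ≤ ‖y - w‖) (hx : x - a • y ∈ F) (hz : z ∈ F) : ‖a‖ ≤ ‖x - z‖ := by
  rcases eq_or_ne a 0 with rfl | ha
  · simp
  have hw : a⁻¹ • (z - (x - a • y)) ∈ F := F.smul_mem _ (F.sub_mem hz hx)
  calc ‖a‖ ≤ ‖a‖ * ‖y - a⁻¹ • (z - (x - a • y))‖ :=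
        le_mul_of_one_le_right (norm_nonneg a) (hy _ hw)
    _ = ‖x - z‖ := by
        rw [← norm_smul, smul_sub, smul_inv_smul₀ ha]
        congr 1
        abel

theorem exists_lt_norm_map_sub_lt {𝕜 E F : Type*} [NontriviallyNormedField 𝕜]
    [SeminormedAddCommGroup E] [NormedSpace 𝕜 E] [SeminormedAddCommGroup F] [NormedSpace 𝕜 F]
    {T : E →ₗ[𝕜] F} (hT : IsCompactOperator T) {y : ℕ → E} {r : ℝ} (hy : ∀ n, ‖y n‖ ≤ r)
    {δ : ℝ} (hδ : 0 < δ) : ∃ m n, m < n ∧ ‖T (y n) - T (y m)‖ < δ := by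
  obtain ⟨K, hK, hTK⟩ := hT.image_closedBall_subset_compact r
  obtain ⟨a, -, ψ, hψ, hlim⟩ :=
    hK.tendsto_subseq fun n ↦ hTK ⟨y n, mem_closedBall_zero_iff.2 (hy n), rfl⟩
  obtain ⟨N, hN⟩ := Metric.cauchySeq_iff'.1 hlim.cauchySeq δ hδ
  exact ⟨ψ N, ψ (N + 1), hψ N.lt_succ_self, by simpa [dist_eq_norm] using hN (N + 1) N.le_succ⟩

theorem exists_norm_lt_of_strictMono {𝕜 E : Type*} [NontriviallyNormedField 𝕜]
    [NormedAddCommGroup E] [NormedSpace 𝕜 E] {T : E →ₗ[𝕜] E} (hT : IsCompactOperator T)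
    {V : ℕ → Submodule 𝕜 E} (hV : StrictMono V) (hclosed : ∀ n, IsClosed (V n : Set E))
    {μ : ℕ → 𝕜} (hmaps : ∀ n, ∀ y ∈ V (n + 1), T y - μ n • y ∈ V n) {δ : ℝ} (hδ : 0 < δ) :
    ∃ n, ‖μ n‖ < δ := by
  obtain ⟨c, hc⟩ := NormedField.exists_one_lt_norm 𝕜
  choose y hyV hynorm hyfar using fun n ↦
    exists_mem_one_le_norm_sub_of_lt hc (lt_add_one ‖c‖) (hclosed n) (hV n.lt_succ_self)
  have hTy (m : ℕ) : T (y m) ∈ V (m + 1) := by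
    simpa using (V (m + 1)).add_mem (hV.monotone m.le_succ (hmaps m _ (hyV m)))
      ((V (m + 1)).smul_mem (μ m) (hyV m))
  obtain ⟨m, n, hmn, hlt⟩ := exists_lt_norm_map_sub_lt hT hynorm hδ
  exact ⟨n, (norm_le_norm_sub_of_sub_smul_mem (hyfar n) (hmaps n _ (hyV n))
    (hV.monotone hmn (hTy m))).trans_lt hlt⟩

section Eigenvalues

/-- The kernel of `(T - μ 0) ⋯ (T - μ (n - 1))`. For distinct eigenvalues `μ i` these kernels
form the chain of subspaces to which Riesz's lemma is applied; they are closed as soon as `T` is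
continuous, whereas spans of eigenvectors are known to be closed only over a complete field. -/
def kerProdSub {𝕜 E : Type*} [CommRing 𝕜] [AddCommGroup E] [Module 𝕜 E] (T : Module.End 𝕜 E)
    (μ : ℕ → 𝕜) : ℕ → Submodule 𝕜 E
  | 0 => ⊥
  | n + 1 => (kerProdSub T μ n).comap (T - μ n • 1)

theorem mem_kerProdSub_succ {𝕜 E : Type*} [CommRing 𝕜] [AddCommGroup E] [Module 𝕜 E]
    {T : Module.End 𝕜 E} {μ : ℕ → 𝕜} {n : ℕ} {x : E} :
    x ∈ kerProdSub T μ (n + 1) ↔ T x - μ n • x ∈ kerProdSub T μ n :=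
  Iff.rfl

theorem monotone_kerProdSub {𝕜 E : Type*} [CommRing 𝕜] [AddCommGroup E] [Module 𝕜 E]
    (T : Module.End 𝕜 E) (μ : ℕ → 𝕜) : Monotone (kerProdSub T μ) := by
  refine monotone_nat_of_le_succ fun n ↦ ?_
  induction n with
  | zero => exact bot_le
  | succ n ih =>
    intro x hx
    have hsplit : T x - μ (n + 1) • x = (T x - μ n • x) + (μ n - μ (n + 1)) • x := by module
    rw [mem_kerProdSub_succ, hsplit]
    exact add_mem (ih (mem_kerProdSub_succ.1 hx)) (Submodule.smul_mem _ _ hx)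

theorem mem_kerProdSub_iff_of_hasEigenvector {𝕜 E : Type*} [Field 𝕜] [AddCommGroup E] [Module 𝕜 E]
    {T : Module.End 𝕜 E} {μ : ℕ → 𝕜} {n : ℕ} {a : 𝕜} {x : E} (hx : HasEigenvector T a x) :
    x ∈ kerProdSub T μ n ↔ ∃ i < n, a = μ i := by
  induction n with
  | zero => simpa [kerProdSub] using hx.2
  | succ n ih =>
    rw [mem_kerProdSub_succ, hx.apply_eq_smul, ← sub_smul]
    rcases eq_or_ne a (μ n) with rfl | ha
    · simpa using ⟨n, le_rfl, rfl⟩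
    · simp only [Submodule.smul_mem_iff _ (sub_ne_zero.2 ha), ih, Nat.exists_lt_succ_right, ha,
        or_false]

theorem strictMono_kerProdSub {𝕜 E : Type*} [Field 𝕜] [AddCommGroup E] [Module 𝕜 E]
    {T : Module.End 𝕜 E} {μ : ℕ → 𝕜} (hμ : Function.Injective μ)
    (hT : ∀ n, HasEigenvalue T (μ n)) : StrictMono (kerProdSub T μ) := by
  refine strictMono_nat_of_lt_succ fun n ↦ ?_
  obtain ⟨x, hx⟩ := (hT n).exists_hasEigenvector
  refine SetLike.lt_iff_le_and_exists.2 ⟨monotone_kerProdSub T μ n.le_succ, x, ?_, ?_⟩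
  · exact (mem_kerProdSub_iff_of_hasEigenvector hx).2 ⟨n, n.lt_succ_self, rfl⟩
  · rw [mem_kerProdSub_iff_of_hasEigenvector hx]
    rintro ⟨i, hi, hni⟩
    exact hi.ne' (hμ hni)

variable {𝕜 E : Type*} [NontriviallyNormedField 𝕜] [NormedAddCommGroup E] [NormedSpace 𝕜 E]

theorem isClosed_kerProdSub {T : Module.End 𝕜 E} (hT : Continuous T) (μ : ℕ → 𝕜) (n : ℕ) :
    IsClosed (kerProdSub T μ n : Set E) := by
  induction n with
  | zero => exact isClosed_singleton
  | succ n ih => exact ih.preimage (hT.sub (continuous_const_smul (μ n)))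

theorem finite_setOf_hasEigenvalue {T : Module.End 𝕜 E} (hT : IsCompactOperator T) {δ : ℝ}
    (hδ : 0 < δ) : {μ : 𝕜 | δ ≤ ‖μ‖ ∧ HasEigenvalue T μ}.Finite := by
  by_contra hinf
  let μ := Set.Infinite.natEmbedding _ hinf
  obtain ⟨n, hn⟩ := exists_norm_lt_of_strictMono hT
    (strictMono_kerProdSub (Subtype.val_injective.comp μ.injective) fun n ↦ (μ n).2.2)
    (isClosed_kerProdSub hT.continuous _) (fun _ _ ↦ mem_kerProdSub_succ.1) hδ
  exact hn.not_ge (μ n).2.1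

theorem finite_setOf_hasEigenvalue_of_pow {T : Module.End 𝕜 E} {k : ℕ} (hk : k ≠ 0)
    (hT : IsCompactOperator ⇑(T ^ k)) {δ : ℝ} (hδ : 0 < δ) :
    {μ : 𝕜 | δ ≤ ‖μ‖ ∧ HasEigenvalue T μ}.Finite := by
  have hroots (b : 𝕜) : ((· ^ k) ⁻¹' {b}).Finite :=
    (nthRootsFinset k b).finite_toSet.subset fun a ha ↦
      (mem_nthRootsFinset (Nat.pos_of_ne_zero hk) b).2 ha
  refine ((finite_setOf_hasEigenvalue hT (pow_pos hδ k)).preimage'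
    fun b _ ↦ hroots b).subset fun μ ⟨hδμ, hμ⟩ ↦ ⟨?_, hμ.pow k⟩
  rw [norm_pow]
  exact pow_le_pow_left₀ hδ.le hδμ k

end Eigenvalues

section Companion

variable {𝕜 X : Type*} [NontriviallyNormedField 𝕜] [NormedAddCommGroup X] [NormedSpace 𝕜 X]

/-- The companion operator `(u, v) ↦ (-(K u + L v), u)` of the monic quadratic pencil
`w ↦ 1 + w • K + w ^ 2 • L`: a kernel vector `u` of the pencil at `w` gives the eigenvector
`(u, w • u)` for the eigenvalue `w⁻¹`. -/
def companion (K L : X →L[𝕜] X) : Module.End 𝕜 (X × X) :=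
  (-(K.coprod L : X × X →ₗ[𝕜] X)).prod (.fst 𝕜 X X)

theorem companion_apply (K L : X →L[𝕜] X) (p : X × X) :
    companion K L p = (-(K p.1 + L p.2), p.1) := rfl

theorem continuous_companion (K L : X →L[𝕜] X) : Continuous (companion K L) :=
  (K.coprod L).continuous.neg.prodMk continuous_fst

theorem isCompactOperator_companion_sq {K L : X →L[𝕜] X} (hK : IsCompactOperator K)
    (hL : IsCompactOperator L) : IsCompactOperator ⇑(companion K L ^ 2) := by
  have hcoprod : IsCompactOperator fun p : X × X ↦ -(K p.1 + L p.2) :=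
    ((hK.comp_clm (.fst 𝕜 X X)).add (hL.comp_clm (.snd 𝕜 X X))).neg
  rw [sq]
  exact isCompactOperator_prodMk
    (hcoprod.comp_clm (⟨companion K L, continuous_companion K L⟩ : X × X →L[𝕜] X × X)) hcoprod

end Companion

section QuadraticPencil

variable {𝕜 X Y : Type*} [NontriviallyNormedField 𝕜] [NormedAddCommGroup X] [NormedSpace 𝕜 X]
  [NormedAddCommGroup Y] [NormedSpace 𝕜 Y]

/-- The quadratic operator pencil `R + z A + z² B`. -/
def quadraticPencil (R A B : X →L[𝕜] Y) (z : 𝕜) : X →L[𝕜] Y := R + z • A + z ^ 2 • B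

/-- The critical parameters of the quadratic pencil, where it has nontrivial kernel: the analogue
of `critSet` over any nontrivially normed field. -/
def pencilCritSet (R A B : X →L[𝕜] Y) : Set 𝕜 := {z | ∃ u, u ≠ 0 ∧ quadraticPencil R A B z u = 0}

theorem quadraticPencil_add (R A B : X →L[𝕜] Y) (z w : 𝕜) :
    quadraticPencil R A B (z + w) =
      quadraticPencil (quadraticPencil R A B z) (A + (2 * z) • B) B w := by
  simp only [quadraticPencil]
  module

theorem comp_quadraticPencil {Z : Type*} [NormedAddCommGroup Z] [NormedSpace 𝕜 Z]
    (S : Y →L[𝕜] Z) (R A B : X →L[𝕜] Y) (z : 𝕜) :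
    S ∘L quadraticPencil R A B z = quadraticPencil (S ∘L R) (S ∘L A) (S ∘L B) z := by
  simp [quadraticPencil]

theorem pencilCritSet_subset_comp {Z : Type*} [NormedAddCommGroup Z] [NormedSpace 𝕜 Z]
    (S : Y →L[𝕜] Z) (R A B : X →L[𝕜] Y) :
    pencilCritSet R A B ⊆ pencilCritSet (S ∘L R) (S ∘L A) (S ∘L B) := by
  rintro z ⟨u, hu, hzu⟩
  exact ⟨u, hu, by rw [← comp_quadraticPencil, ContinuousLinearMap.comp_apply, hzu, map_zero]⟩

theorem zero_notMem_pencilCritSet_id (K L : X →L[𝕜] X) :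
    (0 : 𝕜) ∉ pencilCritSet (.id 𝕜 X) K L := by
  rintro ⟨u, hu, h0u⟩
  exact hu (by simpa [quadraticPencil] using h0u)

theorem hasEigenvalue_companion_inv {K L : X →L[𝕜] X} {w : 𝕜}
    (hw : w ∈ pencilCritSet (.id 𝕜 X) K L) : HasEigenvalue (companion K L) w⁻¹ := by
  have hw0 : w ≠ 0 := ne_of_mem_of_not_mem hw (zero_notMem_pencilCritSet_id K L)
  obtain ⟨u, hu, hwu⟩ := hw
  have hker : u + w • (K u + w • L u) = 0 := by
    simpa [quadraticPencil, smul_smul, sq, add_assoc] using hwu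
  have hfst : -(K u + w • L u) = w⁻¹ • u := by
    rw [eq_inv_smul_iff₀ hw0, smul_neg]
    exact (eq_neg_of_add_eq_zero_left hker).symm
  refine hasEigenvalue_of_hasEigenvector (x := (u, w • u))
    (hasEigenvector_iff.2 ⟨mem_eigenspace_iff.2 ?_, fun h ↦ hu (congrArg Prod.fst h)⟩)
  rw [companion_apply, map_smul, hfst, Prod.smul_mk, inv_smul_smul₀ hw0]

theorem finite_pencilCritSet_id_inter {K L : X →L[𝕜] X} (hK : IsCompactOperator K)
    (hL : IsCompactOperator L) {s : Set 𝕜} (hs : IsBounded s) :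
    (pencilCritSet (.id 𝕜 X) K L ∩ s).Finite := by
  obtain ⟨r, hr, hsr⟩ := hs.exists_pos_norm_le
  have hfin := finite_setOf_hasEigenvalue_of_pow two_ne_zero
    (isCompactOperator_companion_sq hK hL) (inv_pos.2 hr)
  refine (hfin.preimage inv_injective.injOn).subset fun w ⟨hw, hws⟩ ↦
    ⟨?_, hasEigenvalue_companion_inv hw⟩
  have hw0 : w ≠ 0 := ne_of_mem_of_not_mem hw (zero_notMem_pencilCritSet_id K L)
  rw [norm_inv]
  exact inv_anti₀ (norm_pos_iff.2 hw0) (hsr w hws)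

theorem finite_pencilCritSet_inter {R A B : X →L[𝕜] Y} (hA : IsCompactOperator A)
    (hB : IsCompactOperator B) {z₀ : 𝕜} {S₀ : Y →L[𝕜] X}
    (hS₀ : S₀ ∘L quadraticPencil R A B z₀ = .id 𝕜 X) {s : Set 𝕜} (hs : IsBounded s) :
    (pencilCritSet R A B ∩ s).Finite := by
  have hK : IsCompactOperator (S₀ ∘L (A + (2 * z₀) • B)) :=
    (hA.add (hB.smul (2 * z₀))).clm_comp S₀
  have hL : IsCompactOperator (S₀ ∘L B) := hB.clm_comp S₀
  have hbdd : IsBounded ((z₀ + ·) ⁻¹' s) :=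
    (isometry_add_left z₀).antilipschitz.isBounded_preimage hs
  refine ((finite_pencilCritSet_id_inter hK hL hbdd).image (z₀ + ·)).subset ?_
  rintro z ⟨⟨u, hu, hzu⟩, hzs⟩
  refine ⟨z - z₀, ⟨?_, by simpa using hzs⟩, add_sub_cancel z₀ z⟩
  rw [← hS₀]
  exact pencilCritSet_subset_comp S₀ _ _ _
    ⟨u, hu, by rwa [← quadraticPencil_add, add_sub_cancel]⟩

end QuadraticPencil

theorem stmt7_general {𝕜 X Y : Type*} [NontriviallyNormedField 𝕜]
    [NormedAddCommGroup X] [NormedSpace 𝕜 X] [NormedAddCommGroup Y] [NormedSpace 𝕜 Y]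
    {R A B : X →L[𝕜] Y} (hA : IsCompactOperator A) (hB : IsCompactOperator B)
    {z₀ : 𝕜} {S₀ : Y →L[𝕜] X} (hS₀ : S₀ ∘L quadraticPencil R A B z₀ = .id 𝕜 X) :
    IsClosed (pencilCritSet R A B) ∧
    ∀ z ∈ pencilCritSet R A B, ∃ ε > 0, pencilCritSet R A B ∩ Metric.ball z ε = {z} := by
  obtain ⟨hclosed, hdiscrete⟩ :=
    isClosed_and_isDiscrete_of_finite_inter fun _ ↦ finite_pencilCritSet_inter hA hB hS₀
  refine ⟨hclosed, fun z hz ↦ ?_⟩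
  simpa only [Set.inter_comm] using
    Metric.exists_ball_inter_eq_singleton_of_mem_discrete hdiscrete hz

/-- If the pencil `R + z·A + z²·B` (with `A, B` compact) is boundedly invertible for
some `z₀`, then the set of `z` with nontrivial kernel is closed and discrete. -/
theorem stmt7 {X Y : Type*} [NormedAddCommGroup X] [NormedSpace ℂ X] [CompleteSpace X]
    [NormedAddCommGroup Y] [NormedSpace ℂ Y] [CompleteSpace Y]
    (R A B : X →L[ℂ] Y) (hA : IsCompactOperator A) (hB : IsCompactOperator B)
    (hinv : ∃ z₀ : ℂ, ∃ S₀ : Y →L[ℂ] X,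
      S₀.comp (R + z₀ • A + z₀ ^ 2 • B) = ContinuousLinearMap.id ℂ X ∧
      (R + z₀ • A + z₀ ^ 2 • B).comp S₀ = ContinuousLinearMap.id ℂ Y) :
    IsClosed (critSet R A B) ∧
    ∀ z ∈ critSet R A B, ∃ ε > 0, critSet R A B ∩ Metric.ball z ε = {z} := by
  obtain ⟨z₀, S₀, hS₀, -⟩ := hinv
  exact stmt7_general hA hB hS₀
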